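/- arXiv:2011.01501 — 2 statements merged into one kernel-verified Lean document; each statement's English description precedes it below -/
import Mathlib

section
/- The ilr transformation preserves the inner product: for D ≥ 2, define ilr : S^D → ℝ^{D−1} by ilr(x)_i := (x, e_i)_S, where e_i := C(exp(w_i)) with (w_i)_k = 1/√(i(i+1)) for k ≤ i, (w_i)_{i+1} = −√(i/(i+1)), and (w_i)_k = 0 for k > i+1. Then for all x, y ∈ S^D, the Euclidean inner product ⟨ilr(x), ilr(y)⟩ in ℝ^{D−1} equals the Aitchison inner product (x, y)_S. -/
open Finset

noncomputable section

/-- Membership in the D-part simplex: strictly positive entries summing to 1. -/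
def inSimplex {D : ℕ} (x : Fin D → ℝ) : Prop :=
  (∀ i, 0 < x i) ∧ ∑ i, x i = 1

/-- Closure operation: divide each entry by the total sum. -/
def clo {D : ℕ} (z : Fin D → ℝ) : Fin D → ℝ :=
  fun i => z i / ∑ j, z j

/-- Perturbation `x ⊕ y`. -/
def pert {D : ℕ} (x y : Fin D → ℝ) : Fin D → ℝ :=
  clo (fun i => x i * y i)

/-- Inverse perturbation `x ⊖ y`. -/
def ipert {D : ℕ} (x y : Fin D → ℝ) : Fin D → ℝ :=
  clo (fun i => x i / y i)

/-- Power transformation `a ⊗ x` (componentwise real power, then closure). -/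
def apow {D : ℕ} (a : ℝ) (x : Fin D → ℝ) : Fin D → ℝ :=
  clo (fun i => x i ^ a)

/-- Geometric mean of the components. -/
def gmean {D : ℕ} (x : Fin D → ℝ) : ℝ :=
  (∏ i, x i) ^ ((1 : ℝ) / D)

/-- Aitchison inner product `(x, y)_S`. -/
def aInner {D : ℕ} (x y : Fin D → ℝ) : ℝ :=
  ∑ i, Real.log (x i / gmean x) * Real.log (y i / gmean y)

/-- Aitchison norm `‖x‖_S`. -/
def aNorm {D : ℕ} (x : Fin D → ℝ) : ℝ :=
  Real.sqrt (aInner x x)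

/-- The uniform (neutral) composition (1/D, …, 1/D). -/
def unif (D : ℕ) : Fin D → ℝ := fun _ => 1 / (D : ℝ)

/-- The clr-coordinates `w i` of the i-th standard ilr basis composition
    (components indexed by `Fin D`, corresponding to 1-based components 1..D):
    entry `1/√(i(i+1))` in the first i components, `-√(i/(i+1))` in component i+1,
    and 0 afterwards. -/
def w (D i : ℕ) : Fin D → ℝ := fun k =>
  if (k : ℕ) < i then 1 / Real.sqrt ((i : ℝ) * ((i : ℝ) + 1))
  else if (k : ℕ) = i then - Real.sqrt ((i : ℝ) / ((i : ℝ) + 1))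
  else 0

/-- The i-th standard ilr basis composition `e i := C(exp (w i))`. -/
def e (D i : ℕ) : Fin D → ℝ := clo (fun k => Real.exp (w D i k))

/-- The ilr transformation: `ilr(x)_i = (x, e_i)_S` for i = 1, …, D-1
    (here `i : Fin (D-1)` corresponds to the 1-based index `i+1`). -/
def ilr {D : ℕ} (x : Fin D → ℝ) : Fin (D - 1) → ℝ :=
  fun i => aInner x (e D ((i : ℕ) + 1))

/-!
In centred log-ratio coordinates the Aitchison inner product is the Euclidean dot product, every
composition has coordinate sum zero, and `e D i` has coordinate vector `w D i`. It remains to prove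
Parseval's identity for the vectors `w D i` on the hyperplane of sum-zero vectors. On all of
`ℝ ^ D` it reads `∑ i, (a ⬝ᵥ w D i) * (b ⬝ᵥ w D i) = a ⬝ᵥ b - (∑ a) (∑ b) / D`, where the right-hand
side is the dot product of the centred vectors: appending a coordinate to vectors of length `n`
changes this by exactly the product of the components along `w (n + 1) n`, so the identity
telescopes.
-/

/-- The centred log-ratio transform. It turns `aInner` into the Euclidean dot product, which is how
the Aitchison geometry of compositions is reduced to linear algebra in `ℝ ^ D`. -/
def clr {D : ℕ} (x : Fin D → ℝ) : Fin D → ℝ :=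
  fun i => Real.log (x i / gmean x)

lemma aInner_eq_clr_dotProduct_clr {D : ℕ} (x y : Fin D → ℝ) :
    aInner x y = clr x ⬝ᵥ clr y :=
  rfl

section clr

variable {D : ℕ} {x : Fin D → ℝ}

lemma clr_apply_of_pos (hx : ∀ i, 0 < x i) (i : Fin D) :
    clr x i = Real.log (x i) - (∑ j, Real.log (x j)) / D := by
  have prod_pos : 0 < ∏ j, x j := Finset.prod_pos fun j _ => hx j
  have gmean_pos : 0 < gmean x := Real.rpow_pos_of_pos prod_pos _
  rw [clr, Real.log_div (hx i).ne' gmean_pos.ne', gmean, Real.log_rpow prod_pos,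
    Real.log_prod fun j _ => (hx j).ne', one_div_mul_eq_div]

lemma sum_clr_of_pos (hx : ∀ i, 0 < x i) : ∑ i, clr x i = 0 := by
  rcases eq_or_ne D 0 with rfl | hD
  · exact Fin.sum_univ_zero _
  · simp only [clr_apply_of_pos hx, sum_sub_distrib, sum_const, card_univ, Fintype.card_fin,
      nsmul_eq_mul]
    rw [mul_div_cancel₀ _ (Nat.cast_ne_zero.2 hD), sub_self]

lemma clr_smul_of_pos {c : ℝ} (hc : 0 < c) (hx : ∀ i, 0 < x i) : clr (c • x) = clr x := by
  funext i
  have hD : (D : ℝ) ≠ 0 := Nat.cast_ne_zero.2 i.pos.ne'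
  have log_smul (j : Fin D) : Real.log ((c • x) j) = Real.log c + Real.log (x j) :=
    Real.log_mul hc.ne' (hx j).ne'
  have smul_pos (j : Fin D) : 0 < (c • x) j := mul_pos hc (hx j)
  rw [clr_apply_of_pos smul_pos, clr_apply_of_pos hx]
  simp only [log_smul, sum_add_distrib, sum_const, card_univ, Fintype.card_fin, nsmul_eq_mul]
  field_simp
  ring

lemma clr_clo_of_pos (hx : ∀ i, 0 < x i) : clr (clo x) = clr x := by
  funext i
  have sum_pos : 0 < ∑ j, x j := Finset.sum_pos (fun j _ => hx j) ⟨i, mem_univ i⟩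
  have clo_eq_smul : clo x = (∑ j, x j)⁻¹ • x := funext fun j => div_eq_inv_mul _ _
  rw [clo_eq_smul, clr_smul_of_pos (inv_pos.2 sum_pos) hx]

lemma clr_clo_exp {v : Fin D → ℝ} (hv : ∑ i, v i = 0) :
    clr (clo fun i => Real.exp (v i)) = v := by
  have exp_pos (i : Fin D) : 0 < Real.exp (v i) := Real.exp_pos _
  funext i
  simp only [clr_clo_of_pos exp_pos, clr_apply_of_pos exp_pos, Real.log_exp, hv, zero_div,
    sub_zero]

end clr

section Helmert

variable {n : ℕ}

lemma w_zero (D : ℕ) : w D 0 = 0 := by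
  funext k
  simp [w]

lemma dotProduct_w_of_lt {i : ℕ} (hi : i < n) (a : Fin (n + 1) → ℝ) :
    a ⬝ᵥ w (n + 1) i = Fin.init a ⬝ᵥ w n i := by
  have w_last : w (n + 1) i (Fin.last n) = 0 := by simp [w, hi.not_gt, hi.ne']
  rw [dotProduct, Fin.sum_univ_castSucc, w_last, mul_zero, add_zero]
  rfl

lemma dotProduct_w_self (a : Fin (n + 1) → ℝ) :
    a ⬝ᵥ w (n + 1) n =
      (∑ k, Fin.init a k - n * a (Fin.last n)) / √((n : ℝ) * (n + 1)) := by
  have w_castSucc (k : Fin n) : w (n + 1) n k.castSucc = 1 / √((n : ℝ) * (n + 1)) := by simp [w]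
  have w_last : w (n + 1) n (Fin.last n) = -(n / √((n : ℝ) * (n + 1))) := by
    have sqrt_div_succ : √((n : ℝ) / (n + 1)) = n / √((n : ℝ) * (n + 1)) := by
      rw [Real.sqrt_div n.cast_nonneg, Real.sqrt_mul n.cast_nonneg, ← div_div, Real.div_sqrt]
    simp [w, sqrt_div_succ]
  simp only [dotProduct, Fin.sum_univ_castSucc, w_castSucc, w_last, ← sum_mul, Fin.init]
  ring

lemma sum_w {D i : ℕ} (hi : i < D) : ∑ k, w D i k = 0 := by
  simp only [← one_dotProduct]
  induction D, hi using Nat.le_induction with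
  | base => simp [dotProduct_w_self, Fin.init]
  | succ D hi ih => exact (dotProduct_w_of_lt hi 1).trans ih

lemma dotProduct_w_self_mul_dotProduct_w_self (a b : Fin (n + 1) → ℝ) :
    (a ⬝ᵥ w (n + 1) n) * (b ⬝ᵥ w (n + 1) n) =
      (a ⬝ᵥ b - (∑ k, a k) * (∑ k, b k) / (n + 1 : ℕ)) -
        (Fin.init a ⬝ᵥ Fin.init b - (∑ k, Fin.init a k) * (∑ k, Fin.init b k) / n) := by
  rcases eq_or_ne n 0 with rfl | hn
  · simp [w_zero, dotProduct]
  have dotProduct_eq_init_add :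
      a ⬝ᵥ b = Fin.init a ⬝ᵥ Fin.init b + a (Fin.last n) * b (Fin.last n) :=
    Fin.sum_univ_castSucc _
  have sum_eq_init_add (c : Fin (n + 1) → ℝ) :
      ∑ k, c k = ∑ k, Fin.init c k + c (Fin.last n) :=
    Fin.sum_univ_castSucc _
  rw [dotProduct_w_self, dotProduct_w_self, div_mul_div_comm, Real.mul_self_sqrt (by positivity),
    dotProduct_eq_init_add, sum_eq_init_add a, sum_eq_init_add b]
  push_cast
  field_simp
  ring

lemma sum_dotProduct_w_mul_dotProduct_w {D : ℕ} (a b : Fin D → ℝ) :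
    ∑ i : Fin D, (a ⬝ᵥ w D i) * (b ⬝ᵥ w D i) =
      a ⬝ᵥ b - (∑ k, a k) * (∑ k, b k) / D := by
  induction D with
  | zero => simp
  | succ n ih =>
    simp only [Fin.sum_univ_castSucc (n := n) (fun i => (a ⬝ᵥ w _ i) * (b ⬝ᵥ w _ i)),
      Fin.val_castSucc, Fin.val_last, dotProduct_w_of_lt (Fin.is_lt _)]
    rw [ih, dotProduct_w_self_mul_dotProduct_w_self]
    ring

end Helmert

lemma ilr_apply {D : ℕ} (x : Fin D → ℝ) (i : Fin (D - 1)) :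
    ilr x i = clr x ⬝ᵥ w D (i + 1) := by
  rw [ilr, aInner_eq_clr_dotProduct_clr, e, clr_clo_exp (sum_w (by omega))]

lemma sum_ilr_mul_ilr {D : ℕ} (x y : Fin D → ℝ) :
    ∑ i, ilr x i * ilr y i = ∑ i : Fin D, (clr x ⬝ᵥ w D i) * (clr y ⬝ᵥ w D i) := by
  cases D with
  | zero => rfl
  | succ n =>
    simp only [ilr_apply, Fin.sum_univ_succ (n := n), Fin.val_zero, Fin.val_succ, w_zero,
      dotProduct_zero, mul_zero, zero_add]
    rfl

theorem ilr_preserves_inner_general {D : ℕ} {x y : Fin D → ℝ}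
    (hx : ∀ i, 0 < x i) (hy : ∀ i, 0 < y i) :
    ∑ i, ilr x i * ilr y i = aInner x y := by
  rw [sum_ilr_mul_ilr, sum_dotProduct_w_mul_dotProduct_w, sum_clr_of_pos hx, sum_clr_of_pos hy,
    mul_zero, zero_div, sub_zero, aInner_eq_clr_dotProduct_clr]

/-- the ilr transformation preserves the inner product:
    the Euclidean inner product of the ilr coordinates equals the
    Aitchison inner product. -/
theorem ilr_preserves_inner (D : ℕ) (hD : 2 ≤ D) (x y : Fin D → ℝ)
    (hx : inSimplex x) (hy : inSimplex y) :
    ∑ i, ilr x i * ilr y i = aInner x y :=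
  ilr_preserves_inner_general hx.1 hy.1
end
end

section
/- Invertibility of generalized accumulation: for D ≥ 2, let B be an invertible real n×n matrix and x_1, …, x_n ∈ S^D. Define the generalized accumulation (B ⊗ X)_i := ⊕_{j=1}^{n} (β_{ij} ⊗ x_j). Then applying the generalized accumulation of B⁻¹ to the sequence (B ⊗ X)_1, …, (B ⊗ X)_n recovers the original data: (B⁻¹ ⊗ (B ⊗ X))_i = x_i for every i. -/
open Finset

noncomputable section

/-- Repeated perturbation of a list of compositions (with the uniform
    composition, the neutral element, as the empty value). -/
def bigPert {D : ℕ} (l : List (Fin D → ℝ)) : Fin D → ℝ :=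
  l.foldr pert (unif D)

/-- Generalized accumulation: `(B ⊗ X)_i := ⊕_{j=1}^{n} (β_{ij} ⊗ x_j)`. -/
def genAcc {n D : ℕ} (B : Fin n → Fin n → ℝ) (x : Fin n → Fin D → ℝ) :
    Fin n → Fin D → ℝ :=
  fun i => bigPert (List.ofFn fun j => apow (B i j) (x j))

/-!
Every composition is the closure of the exponential of its logarithm, and `v ↦ C(exp v)` turns
addition into perturbation and scaling into powering, because the closure forgets the normalizing
constants. Accumulation by `B` therefore becomes left multiplication by `B` of the matrix of
log-components, which `B⁻¹` undoes.
-/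

section

variable {n D : ℕ}

/-- The composition `C(exp v)` with logarithmic coordinates `v`, which are determined up to an
additive constant. It transports the vector space structure of `ℝ^D` to the simplex. -/
def softmax (v : Fin D → ℝ) : Fin D → ℝ :=
  clo fun k => Real.exp (v k)

theorem clo_const_mul {c : ℝ} (hc : c ≠ 0) (z : Fin D → ℝ) :
    clo (fun k => c * z k) = clo z := by
  funext k
  simp only [clo, ← mul_sum, mul_div_mul_left _ _ hc]

theorem clo_eq_self {z : Fin D → ℝ} (hz : ∑ k, z k = 1) : clo z = z := by
  funext k
  rw [clo, hz, div_one]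

theorem softmax_sub_const (v : Fin D → ℝ) (c : ℝ) :
    softmax (fun k => v k - c) = softmax v := by
  simp only [softmax, sub_eq_neg_add, Real.exp_add, clo_const_mul (Real.exp_ne_zero _)]

theorem softmax_apply (v : Fin D → ℝ) (k : Fin D) :
    softmax v k = Real.exp (v k - Real.log (∑ j, Real.exp (v j))) := by
  have sum_exp_pos : 0 < ∑ j, Real.exp (v j) :=
    sum_pos (fun j _ => Real.exp_pos (v j)) ⟨k, mem_univ k⟩
  rw [Real.exp_sub, Real.exp_log sum_exp_pos, softmax, clo]

theorem inSimplex.softmax_log {x : Fin D → ℝ} (hx : inSimplex x) :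
    softmax (fun k => Real.log (x k)) = x := by
  simp only [softmax, Real.exp_log (hx.1 _), clo_eq_self hx.2]

theorem softmax_zero : softmax (0 : Fin D → ℝ) = unif D := by
  funext k
  simp [softmax, clo, unif]

theorem pert_softmax (v w : Fin D → ℝ) :
    pert (softmax v) (softmax w) = softmax (v + w) := by
  simp only [pert, softmax_apply, ← Real.exp_add, sub_add_sub_comm]
  exact softmax_sub_const (v + w) _

theorem apow_softmax (a : ℝ) (v : Fin D → ℝ) :
    apow a (softmax v) = softmax (a • v) := by
  simp only [apow, softmax_apply, ← Real.exp_mul, mul_comm _ a, mul_sub]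
  exact softmax_sub_const (a • v) _

theorem bigPert_map_softmax (l : List (Fin D → ℝ)) :
    bigPert (l.map softmax) = softmax l.sum := by
  induction l with
  | nil => exact softmax_zero.symm
  | cons v l ih =>
    calc bigPert ((v :: l).map softmax)
      _ = pert (softmax v) (bigPert (l.map softmax)) := rfl
      _ = softmax (v :: l).sum := by rw [ih, pert_softmax, List.sum_cons]

theorem genAcc_softmax (B : Matrix (Fin n) (Fin n) ℝ) (V : Matrix (Fin n) (Fin D) ℝ) :
    genAcc (fun a b => B a b) (fun j => softmax (V j)) = fun i => softmax ((B * V) i) := by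
  funext i
  calc bigPert (List.ofFn fun j => apow (B i j) (softmax (V j)))
    _ = bigPert ((List.ofFn fun j => B i j • V j).map softmax) := by
      simp only [apow_softmax, List.map_ofFn, Function.comp_def]
    _ = softmax (∑ j, B i j • V j) := by rw [bigPert_map_softmax, List.sum_ofFn]
    _ = softmax ((B * V) i) := by
      rw [Matrix.mul_apply_eq_vecMul, Matrix.vecMul_eq_sum]

end

/-- invertibility of generalized accumulation: applying the
    generalized accumulation of B⁻¹ to B ⊗ X recovers the original data. -/
theorem genAcc_inverse (n D : ℕ) (hD : 2 ≤ D) (B : Matrix (Fin n) (Fin n) ℝ)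
    (hB : IsUnit B.det) (x : Fin n → Fin D → ℝ)
    (hx : ∀ j, inSimplex (x j)) (i : Fin n) :
    genAcc (fun a b => B⁻¹ a b) (genAcc (fun a b => B a b) x) i = x i := by
  let V : Matrix (Fin n) (Fin D) ℝ := Matrix.of fun j k => Real.log (x j k)
  have softmax_V (j : Fin n) : softmax (V j) = x j := (hx j).softmax_log
  calc genAcc (fun a b => B⁻¹ a b) (genAcc (fun a b => B a b) x) i
    _ = genAcc (fun a b => B⁻¹ a b) (genAcc (fun a b => B a b) fun j => softmax (V j)) i := by
      simp only [softmax_V]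
    _ = softmax ((B⁻¹ * (B * V)) i) := by rw [genAcc_softmax, genAcc_softmax]
    _ = softmax (V i) := by rw [Matrix.nonsing_inv_mul_cancel_left _ _ hB]
    _ = x i := softmax_V i
end
end
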